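/- For every k ∈ ℝ³ and for both choices of sign, the 2×2 complex matrix W^{(±)}(k) := d^{(±)}(k)·I − i·a_x^{(±)}(k)·σx ± i·a_y^{(±)}(k)·σy − i·a_z^{(±)}(k)·σz is unitary. -/

import Mathlib

/-!
With `θⱼ = kⱼ / √3`, the Pauli relations `σz σy = -i σx`, `σz σx = i σy`, `σy σx = -i σz` show that
the walk matrix is the Euler-angle product `exp(-i θ₃ σz) exp(± i θ₂ σy) exp(-i θ₁ σx)`.
Each factor is unitary: for a self-adjoint involution `h`, the elements
`exp(-i θ h) = cos θ - i sin θ h` form a one-parameter group in which taking adjoints reverses `θ`.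
-/

noncomputable section

/-- Pauli matrix σx. -/
def σx : Matrix (Fin 2) (Fin 2) ℂ := !![0, 1; 1, 0]
/-- Pauli matrix σy. -/
def σy : Matrix (Fin 2) (Fin 2) ℂ := !![0, -Complex.I; Complex.I, 0]
/-- Pauli matrix σz. -/
def σz : Matrix (Fin 2) (Fin 2) ℂ := !![1, 0; 0, -1]

section InvolutionRotation

variable {A : Type*} [Ring A] [Algebra ℂ A]

/-- The exponential `exp(-i θ h)` of an involution `h`, written in closed form so that it makes
sense in an algebra without topology. For a Pauli matrix it is the spin-1/2 rotation by `2 θ`. -/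
def involutionRotation (h : A) (θ : ℝ) : A :=
  (Real.cos θ : ℂ) • 1 - (Complex.I * (Real.sin θ : ℂ)) • h

theorem involutionRotation_zero (h : A) : involutionRotation h 0 = 1 := by
  simp [involutionRotation]

theorem involutionRotation_add {h : A} (hh : h * h = 1) (α β : ℝ) :
    involutionRotation h (α + β) = involutionRotation h α * involutionRotation h β := by
  simp only [involutionRotation, Real.cos_add, Real.sin_add, sub_mul, mul_sub, smul_mul_assoc,
    mul_smul_comm, one_mul, mul_one, hh]
  match_scalars
  · linear_combination -(Complex.sin α * Complex.sin β) * Complex.I_sq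
  · ring

variable [StarRing A] [StarModule ℂ A]

theorem star_involutionRotation {h : A} (hh : IsSelfAdjoint h) (θ : ℝ) :
    star (involutionRotation h θ) = involutionRotation h (-θ) := by
  simp only [involutionRotation, star_sub, star_smul, star_one, hh.star_eq, star_mul',
    Complex.star_def, Complex.conj_ofReal, Complex.conj_I, Real.cos_neg, Real.sin_neg,
    Complex.ofReal_neg, neg_mul, mul_neg]

theorem involutionRotation_mem_unitary {h : A} (hsa : IsSelfAdjoint h) (hh : h * h = 1) (θ : ℝ) :
    involutionRotation h θ ∈ unitary A := by
  rw [Unitary.mem_iff, star_involutionRotation hsa, ← involutionRotation_add hh,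
    ← involutionRotation_add hh, neg_add_cancel, add_neg_cancel, involutionRotation_zero]
  exact ⟨rfl, rfl⟩

end InvolutionRotation

section Pauli

open Matrix

theorem isSelfAdjoint_σx : IsSelfAdjoint σx := by
  ext i j; fin_cases i <;> fin_cases j <;> simp [σx]

theorem isSelfAdjoint_σy : IsSelfAdjoint σy := by
  ext i j; fin_cases i <;> fin_cases j <;> simp [σy]

theorem isSelfAdjoint_σz : IsSelfAdjoint σz := by
  ext i j; fin_cases i <;> fin_cases j <;> simp [σz]

theorem σx_mul_σx : σx * σx = 1 := by
  simp [σx, one_fin_two]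

theorem σy_mul_σy : σy * σy = 1 := by
  simp [σy, one_fin_two]

theorem σz_mul_σz : σz * σz = 1 := by
  simp [σz, one_fin_two]

theorem σz_mul_σy : σz * σy = -Complex.I • σx := by
  simp [σx, σy, σz]

theorem σz_mul_σx : σz * σx = Complex.I • σy := by
  simp [σx, σy, σz]

theorem σy_mul_σx : σy * σx = -Complex.I • σz := by
  simp [σx, σy, σz]

theorem pauli_euler_product (a₀ a₁ a₂ b₀ b₁ b₂ : ℂ) :
    (a₂ • 1 - (Complex.I * b₂) • σz) * (a₁ • 1 - (Complex.I * b₁) • σy) *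
        (a₀ • 1 - (Complex.I * b₀) • σx) =
      (a₀ * a₁ * a₂ + b₀ * b₁ * b₂) • 1
        - (Complex.I * (b₀ * a₁ * a₂ - a₀ * b₁ * b₂)) • σx
        - (Complex.I * (a₀ * b₁ * a₂ + b₀ * a₁ * b₂)) • σy
        - (Complex.I * (a₀ * a₁ * b₂ - b₀ * b₁ * a₂)) • σz := by
  simp only [sub_mul, mul_sub, smul_mul_assoc, mul_smul_comm, one_mul, mul_one, σz_mul_σy,
    σz_mul_σx, σy_mul_σx, σx_mul_σx]
  match_scalars <;> grind [Complex.I_sq]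

end Pauli

/-- The one-particle walk matrix `W^{(±)}(k)` of the Weyl cellular automaton is unitary
for every momentum `k ∈ ℝ³` and both choices of sign (`s = 1` or `s = -1`). -/
theorem weyl_walk_unitary (s : ℝ) (hs : s = 1 ∨ s = -1) (k : Fin 3 → ℝ) :
    let c : Fin 3 → ℝ := fun j => Real.cos (k j / Real.sqrt 3)
    let sn : Fin 3 → ℝ := fun j => Real.sin (k j / Real.sqrt 3)
    let d : ℝ := c 0 * c 1 * c 2 - s * (sn 0 * sn 1 * sn 2)
    let ax : ℝ := sn 0 * c 1 * c 2 + s * (c 0 * sn 1 * sn 2)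
    let ay : ℝ := c 0 * sn 1 * c 2 - s * (sn 0 * c 1 * sn 2)
    let az : ℝ := c 0 * c 1 * sn 2 + s * (sn 0 * sn 1 * c 2)
    ((d : ℂ) • (1 : Matrix (Fin 2) (Fin 2) ℂ)
      - (Complex.I * (ax : ℂ)) • σx
      + ((s : ℂ) * (Complex.I * (ay : ℂ))) • σy
      - (Complex.I * (az : ℂ)) • σz) ∈ Matrix.unitaryGroup (Fin 2) ℂ := by
  intro c sn d ax ay az
  let θ : Fin 3 → ℝ := fun j => k j / Real.sqrt 3
  have hcos : Real.cos (-s * θ 1) = c 1 := by rcases hs with rfl | rfl <;> simp [c, θ]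
  have hsin : Real.sin (-s * θ 1) = -s * sn 1 := by rcases hs with rfl | rfl <;> simp [sn, θ]
  have hss : (s : ℂ) ^ 2 = 1 := by rcases hs with rfl | rfl <;> norm_num
  have euler : involutionRotation σz (θ 2) * involutionRotation σy (-s * θ 1) *
      involutionRotation σx (θ 0) = (d : ℂ) • (1 : Matrix (Fin 2) (Fin 2) ℂ)
        - (Complex.I * (ax : ℂ)) • σx + ((s : ℂ) * (Complex.I * (ay : ℂ))) • σy
        - (Complex.I * (az : ℂ)) • σz := by
    simp only [involutionRotation, hcos, hsin]
    refine (pauli_euler_product (c 0) (c 1) (c 2) (sn 0) (-s * sn 1 : ℝ) (sn 2)).trans ?_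
    match_scalars <;> simp only [d, ax, ay, az] <;> push_cast
    · ring
    · ring
    · linear_combination Complex.I * sn 0 * c 1 * sn 2 * hss
    · ring
  rw [← euler]
  exact mul_mem (mul_mem (involutionRotation_mem_unitary isSelfAdjoint_σz σz_mul_σz _)
    (involutionRotation_mem_unitary isSelfAdjoint_σy σy_mul_σy _))
    (involutionRotation_mem_unitary isSelfAdjoint_σx σx_mul_σx _)
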